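/- For the one-sided generalized Pareto density f(x) = (1/σ)(1 + κ x/σ)^{-(1+κ)/κ} with σ > 0, κ > 0, the general power-moment satisfies μ_m^{(n)} = (σ/κ)^m · m! · Γ(n - 1 - m + n/κ) / Γ(n - 1 + n/κ), valid whenever κ < n/(2+m-n) (equivalently n - 1 - m + n/κ > 0). -/

import Mathlib

open MeasureTheory Set Real

lemma aux_J (m : ℕ) : ∀ a : ℝ, (m : ℝ) + 1 < a →
    IntegrableOn (fun x : ℝ => x ^ m * (1 + x) ^ (-a)) (Ioi 0) ∧
    ∫ x in Ioi (0 : ℝ), x ^ m * (1 + x) ^ (-a) =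
      (Nat.factorial m) * Real.Gamma (a - 1 - m) / Real.Gamma a := by
  induction m with
  | zero =>
    intro a ha
    simp only [Nat.cast_zero, zero_add] at ha
    have hi : IntegrableOn (fun x : ℝ => (x + 1) ^ (-a)) (Ioi 0) :=
      integrableOn_add_rpow_Ioi_of_lt (by linarith) (by norm_num)
    constructor
    · simpa [add_comm] using hi
    · have h1 := integral_Ioi_rpow_of_lt (a := -a) (by linarith) (c := 1) one_pos
      have h2 : ∫ x in Ioi (0 : ℝ), (x + 1) ^ (-a) = ∫ x in Ioi (1 : ℝ), x ^ (-a) := by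
        have := (measurePreserving_add_right volume (1 : ℝ)).setIntegral_preimage_emb
          (measurableEmbedding_addRight (1 : ℝ)) (fun x : ℝ => x ^ (-a)) (Ioi 1)
        simpa using this
      have hG : Real.Gamma a = (a - 1) * Real.Gamma (a - 1) := by
        have := Real.Gamma_add_one (s := a - 1) (by linarith)
        simpa using this
      have hp : Real.Gamma (a - 1) ≠ 0 := (Real.Gamma_pos_of_pos (by linarith)).ne'
      have h3 : a - 1 ≠ 0 := by linarith
      have h4 : -a + 1 ≠ 0 := by intro h; apply h3; linarith
      simp only [pow_zero, one_mul, Nat.factorial_zero, Nat.cast_one, Nat.cast_zero, sub_zero]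
      simp_rw [add_comm (1 : ℝ)]
      rw [h2, h1, hG, one_rpow]
      rw [div_eq_div_iff h4 (mul_ne_zero h3 hp)]
      ring
  | succ m ih =>
    intro a ha
    push_cast at ha
    obtain ⟨i1, e1⟩ := ih (a - 1) (by linarith)
    obtain ⟨i2, e2⟩ := ih a (by linarith)
    have hm : (0 : ℝ) ≤ m := Nat.cast_nonneg m
    have key : EqOn (fun x : ℝ => x ^ m * (1 + x) ^ (-(a - 1)) - x ^ m * (1 + x) ^ (-a))
        (fun x : ℝ => x ^ (m + 1) * (1 + x) ^ (-a)) (Ioi 0) := by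
      intro x hx
      have hx : 0 < x := hx
      have : (1 + x) ^ (-(a - 1)) = (1 + x) ^ (-a) * (1 + x) := by
        rw [← rpow_add_one (by linarith)]; congr 1; ring
      simp only [this]; ring
    refine ⟨(i1.sub i2).congr_fun key measurableSet_Ioi, ?_⟩
    rw [← setIntegral_congr_fun measurableSet_Ioi key, integral_sub i1 i2, e1, e2]
    have hG : Real.Gamma a = (a - 1) * Real.Gamma (a - 1) := by
      have := Real.Gamma_add_one (s := a - 1) (by linarith)
      simpa using this
    have hG2 : Real.Gamma (a - 1 - m) = (a - 1 - 1 - m) * Real.Gamma (a - 1 - 1 - m) := by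
      have := Real.Gamma_add_one (s := a - 1 - 1 - m) (by linarith)
      rw [← this]; congr 1; ring
    have hp : Real.Gamma (a - 1) ≠ 0 := (Real.Gamma_pos_of_pos (by linarith)).ne'
    have h3 : a - 1 ≠ 0 := by linarith
    have h5 : a - 1 - ((m + 1 : ℕ) : ℝ) = a - 1 - 1 - m := by push_cast; ring
    rw [h5, hG2, hG, Nat.factorial_succ]
    push_cast
    field_simp
    ring

lemma aux_K (c : ℝ) (hc : 0 < c) (m : ℕ) (a : ℝ) (ha : (m : ℝ) + 1 < a) :
    ∫ x in Ioi (0 : ℝ), x ^ m * (1 + c * x) ^ (-a) =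
      c⁻¹ ^ (m + 1) * ((Nat.factorial m) * Real.Gamma (a - 1 - m) / Real.Gamma a) := by
  have h := integral_comp_mul_left_Ioi (fun x : ℝ => x ^ m * (1 + x) ^ (-a)) 0 hc
  rw [mul_zero, (aux_J m a ha).2] at h
  simp only [mul_pow, mul_assoc, smul_eq_mul] at h
  rw [integral_const_mul] at h
  have hc' : c ^ m ≠ 0 := (pow_pos hc m).ne'
  rw [pow_succ, mul_assoc, ← h, inv_pow, inv_mul_cancel_left₀ hc']

theorem stmt_4 (σ κ : ℝ) (hσ : 0 < σ) (hκ : 0 < κ) (n m : ℕ) (hn : 1 ≤ n)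
    (hdom : (n : ℝ) - 1 - m + n / κ > 0)
    (f : ℝ → ℝ) (hf : ∀ x, f x = (1 / σ) * (1 + κ * x / σ) ^ (-(1 + κ) / κ)) :
    (∫ x in Ioi (0 : ℝ), x ^ m * f x ^ n) / (∫ x in Ioi (0 : ℝ), f x ^ n) =
      (σ / κ) ^ m * (Nat.factorial m) *
        Real.Gamma ((n : ℝ) - 1 - m + n / κ) / Real.Gamma ((n : ℝ) - 1 + n / κ) := by
  have hm : (0 : ℝ) ≤ m := Nat.cast_nonneg m
  have hc : 0 < κ / σ := div_pos hκ hσ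
  obtain ⟨a, ha⟩ : ∃ a : ℝ, a = n + n / κ := ⟨_, rfl⟩
  have H : ∀ k : ℕ, (k : ℝ) + 1 < a → ∫ x in Ioi (0 : ℝ), x ^ k * f x ^ n =
      (1 / σ) ^ n * ((κ / σ)⁻¹ ^ (k + 1) *
        ((Nat.factorial k) * Real.Gamma (a - 1 - k) / Real.Gamma a)) := by
    intro k hk
    rw [← aux_K _ hc k a hk, ← integral_const_mul]
    refine setIntegral_congr_fun measurableSet_Ioi fun x hx => ?_
    have hx : 0 < x := hx
    have hb : 0 < 1 + κ / σ * x := by positivity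
    have h1 : 1 + κ * x / σ = 1 + κ / σ * x := by ring
    have h2 : -(1 + κ) / κ * n = -a := by rw [ha]; field_simp; ring
    simp only [hf]
    rw [h1, mul_pow, ← rpow_mul_natCast hb.le, h2]
    ring
  have hm1 := H m (by rw [ha]; linarith)
  have h0 := H 0 (by rw [ha]; push_cast; linarith)
  simp only [pow_zero, one_mul, Nat.cast_zero, sub_zero, Nat.factorial_zero, Nat.cast_one] at h0
  rw [hm1, h0]
  have e1 : (n : ℝ) - 1 - m + n / κ = a - 1 - m := by rw [ha]; ring
  have e2 : (n : ℝ) - 1 + n / κ = a - 1 := by rw [ha]; ring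
  rw [e1, e2]
  have hp : Real.Gamma (a - 1) ≠ 0 := (Real.Gamma_pos_of_pos (by linarith)).ne'
  have hp2 : Real.Gamma a ≠ 0 := (Real.Gamma_pos_of_pos (by linarith)).ne'
  rw [inv_div, zero_add, pow_one, pow_succ]
  have hs : (1 / σ) ^ n ≠ 0 := by positivity
  have hs2 : σ / κ ≠ 0 := by positivity
  generalize (1 / σ) ^ n = A at *
  generalize σ / κ = B at *
  field_simp
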